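/- Let X be a finite set with |X| = m ≥ 2 and let L be the free Lie algebra over ℤ on X, equipped with its natural ℕ-grading in which the generators have degree 1 (so the degree-n component is spanned by n-fold brackets of generators). Let ρ ∈ L be homogeneous of degree e ≥ 2 and suppose ρ is not a proper multiple, i.e., whenever ρ = k·σ with k ∈ ℤ and σ ∈ L, then k = 1 or k = −1. Then the quotient Lie algebra L/(ρ) of L by the Lie ideal generated by ρ is torsion-free as a ℤ-module. -/

import Mathlib

open LieSubmodule

/-- `IsBracketMonomial X d a` says that `a` is a `d`-fold bracket of generators of the free
Lie algebra over `ℤ` on `X`. -/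
inductive IsBracketMonomial (X : Type*) : ℕ → FreeLieAlgebra ℤ X → Prop
  | of (x : X) : IsBracketMonomial X 1 (FreeLieAlgebra.of ℤ x)
  | lie {d₁ d₂ : ℕ} {a b : FreeLieAlgebra ℤ X} :
      IsBracketMonomial X d₁ a → IsBracketMonomial X d₂ b →
      IsBracketMonomial X (d₁ + d₂) ⁅a, b⁆

/-- The degree-`d` component of the natural ℕ-grading of the free Lie algebra over `ℤ` on
`X` in which the generators have degree `1`: the span of the `d`-fold brackets of
generators. -/
noncomputable def homogeneousComponent (X : Type*) (d : ℕ) : Submodule ℤ (FreeLieAlgebra ℤ X) :=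
  Submodule.span ℤ {a | IsBracketMonomial X d a}

namespace OneRel

section Words
variable {X : Type*} [LinearOrder X]

theorem lt_append_of_ne (a : List X) {t : List X} (ht : t ≠ []) : a < a ++ t := by
  induction a with
  | nil => cases t with
    | nil => exact absurd rfl ht
    | cons x t => simp
  | cons x a ih => simpa [List.cons_lt_cons_iff] using ih

theorem le_append (a t : List X) : a ≤ a ++ t := by
  by_cases ht : t = []
  · simp [ht]
  · exact (lt_append_of_ne a ht).le

theorem append_lt_append_iff (s a b : List X) : s ++ a < s ++ b ↔ a < b := by
  induction s with
  | nil => simp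
  | cons x s ih => simp [ih]

theorem lex_split {a b : List X} (h : a < b) :
    (∃ t, t ≠ [] ∧ b = a ++ t) ∨ (∀ c d, a ++ c < b ++ d) := by
  induction a generalizing b with
  | nil =>
    left
    refine ⟨b, ?_, rfl⟩
    rintro rfl
    exact absurd h (lt_irrefl _)
  | cons x a ih =>
    cases b with
    | nil => simp at h
    | cons y b =>
      rw [List.cons_lt_cons_iff] at h
      rcases h with h | ⟨rfl, h⟩
      · right
        intro c d
        rw [List.cons_append, List.cons_append, List.cons_lt_cons_iff]
        exact Or.inl h
      · rcases ih h with ⟨t, ht, rfl⟩ | h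
        · exact Or.inl ⟨t, ht, rfl⟩
        · right
          intro c d
          rw [List.cons_append, List.cons_append, List.cons_lt_cons_iff]
          exact Or.inr ⟨rfl, h c d⟩

theorem append_lt_append_of_lt {a b : List X} (h : a < b) (hl : b.length ≤ a.length) (c d : List X) :
    a ++ c < b ++ d := by
  rcases lex_split h with ⟨t, ht, rfl⟩ | h
  · exfalso
    have : 0 < t.length := List.length_pos_iff.2 ht
    simp at hl
    exact ht hl
  · exact h c d

/-- Lyndon words. -/
def Lyn (w : List X) : Prop :=
  w ≠ [] ∧ ∀ s t, w = s ++ t → s ≠ [] → t ≠ [] → w < t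

theorem Lyn.append_lt {u v : List X} (hu : Lyn u) (hv : Lyn v) (h : u < v) : u ++ v < v := by
  rcases lex_split h with ⟨t, ht, rfl⟩ | h
  · rw [append_lt_append_iff]
    exact hv.2 u t rfl hu.1 ht
  · simpa using h v []

theorem Lyn.append {u v : List X} (hu : Lyn u) (hv : Lyn v) (h : u < v) : Lyn (u ++ v) := by
  refine ⟨by simp [hu.1], ?_⟩
  intro s t hst hs ht
  have h1 := hu.append_lt hv h
  rcases List.append_eq_append_iff.1 hst with ⟨a, rfl, rfl⟩ | ⟨a, rfl, rfl⟩
  · by_cases ha : a = []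
    · subst ha; simpa using h1
    · exact h1.trans (hv.2 a t rfl ha ht)
  · by_cases ha : a = []
    · subst ha; simpa using h1
    · have := hu.2 s a rfl hs ha
      exact append_lt_append_of_lt this (by simp) _ _

theorem Lyn.unbordered {w : List X} (hw : Lyn w) {s t t' : List X} (h1 : w = s ++ t)
    (h2 : w = t' ++ s) (hs : s ≠ []) : t = [] := by
  by_contra ht
  have ht' : t' ≠ [] := by
    rintro rfl
    have := h1.symm.trans h2
    have := congrArg List.length this
    simp at this
    exact ht this
  have h := hw.2 t' s h2 ht' hs
  rw [h1] at h
  exact absurd (le_append s t) (not_le.2 h)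

theorem wf_bounded [WellFoundedLT X] (N : ℕ) :
    WellFounded (fun u v : {l : List X // l.length ≤ N} => u.1 < v.1) := by
  induction N with
  | zero =>
    refine ⟨fun a => ⟨_, fun b h => ?_⟩⟩
    rcases a with ⟨a, ha⟩
    rcases b with ⟨b, hb⟩
    simp at ha hb
    subst ha hb
    exact absurd h (lt_irrefl _)
  | succ N ih =>
    have key : ∀ p : X × {l : List X // l.length ≤ N}, ∀ h : (p.1 :: p.2.1).length ≤ N + 1,
        Acc (fun u v : {l : List X // l.length ≤ N + 1} => u.1 < v.1) ⟨p.1 :: p.2.1, h⟩ := by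
      intro p
      have wf := WellFounded.prod_lex (wellFounded_lt (α := X)) ih
      induction p using wf.induction with
      | _ p ihp =>
      intro h
      refine ⟨_, ?_⟩
      rintro ⟨b, hb⟩ hlt
      cases b with
      | nil => exact ⟨_, fun c hc => by simp at hc⟩
      | cons y b =>
        have hb' : b.length ≤ N := by simpa using hb
        refine ihp (y, ⟨b, hb'⟩) ?_ hb
        simp only [List.cons_lt_cons_iff] at hlt
        rcases p with ⟨x, l⟩
        rcases hlt with h | ⟨h, h'⟩
        · exact Prod.Lex.left _ _ h
        · simp only at h
          subst h
          exact Prod.Lex.right _ h'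
    refine ⟨?_⟩
    rintro ⟨a, ha⟩
    cases a with
    | nil => exact ⟨_, fun c hc => by simp at hc⟩
    | cons x a => exact key (x, ⟨a, by simpa using ha⟩) ha

end Words

/-- Binary trees with leaves in `X`. -/
inductive BT (X : Type*)
  | leaf : X → BT X
  | node : BT X → BT X → BT X

namespace BT
variable {X : Type*}

def word : BT X → List X
  | leaf x => [x]
  | node u v => word u ++ word v

/-- The right-hand son bound. -/
def Std [LinearOrder X] (v : List X) : BT X → Prop
  | leaf _ => True
  | node _ u'' => v ≤ u''.word

def IsL [LinearOrder X] : BT X → Prop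
  | leaf _ => True
  | node u v => IsL u ∧ IsL v ∧ u.word < v.word ∧ Std v.word u

theorem word_ne_nil (t : BT X) : t.word ≠ [] := by
  induction t with
  | leaf x => simp [word]
  | node u v ih _ => simp [word, ih]

variable [LinearOrder X]

theorem IsL.lyn {t : BT X} (h : t.IsL) : Lyn t.word := by
  induction t with
  | leaf x =>
    refine ⟨word_ne_nil _, ?_⟩
    intro s t hst hs ht
    have := congrArg List.length hst
    simp [word] at this
    have h1 := List.length_pos_iff.2 hs
    have h2 := List.length_pos_iff.2 ht
    omega
  | node u v ihu ihv => exact (ihu h.1).append (ihv h.2.1) h.2.2.1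

/-- the right son is the least proper suffix -/
theorem IsL.min_suffix {u v : BT X} (h : (node u v).IsL) {s t : List X}
    (hst : u.word ++ v.word = s ++ t) (hs : s ≠ []) (ht : t ≠ []) : v.word ≤ t := by
  induction u generalizing v s t with
  | leaf x =>
    simp only [word] at hst
    cases s with
    | nil => exact absurd rfl hs
    | cons y s =>
      simp at hst
      by_cases hs : s = []
      · subst hs; simp [hst.2]
      · exact (h.2.1.lyn.2 s t hst.2 hs ht).le
  | node a b iha ihb =>
    rcases List.append_eq_append_iff.1 hst with ⟨c, h1, h2⟩ | ⟨c, h1, h2⟩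
    · by_cases hc : c = []
      · subst hc; simp [h2]
      · exact (h.2.1.lyn.2 c t h2 hc ht).le
    · by_cases hc : c = []
      · subst hc; simp [h2]
      · have := iha h.1 h1 hs hc
        have h3 : v.word ≤ b.word := h.2.2.2
        rw [h2]
        exact (h3.trans this).trans (le_append _ _)

theorem IsL.injective {t t' : BT X} (h : t.IsL) (h' : t'.IsL) (e : t.word = t'.word) : t = t' := by
  induction t generalizing t' with
  | leaf x =>
    cases t' with
    | leaf y => simp [word] at e; rw [e]
    | node u v =>
      have := congrArg List.length e
      have h1 := List.length_pos_iff.2 u.word_ne_nil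
      have h2 := List.length_pos_iff.2 v.word_ne_nil
      simp [word] at this
      omega
  | node a b iha ihb =>
    cases t' with
    | leaf y =>
      have := congrArg List.length e
      have h1 := List.length_pos_iff.2 a.word_ne_nil
      have h2 := List.length_pos_iff.2 b.word_ne_nil
      simp [word] at this
      omega
    | node u v =>
      simp only [word] at e
      have h1 := h.min_suffix e u.word_ne_nil v.word_ne_nil
      have h2 := h'.min_suffix e.symm a.word_ne_nil b.word_ne_nil
      have h3 : b.word = v.word := le_antisymm h1 h2
      have h4 : a.word = u.word := by
        rw [h3] at e
        exact List.append_cancel_right e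
      rw [iha h.1 h'.1 h4, ihb h.2.1 h'.2.1 h3]

end BT

section Span
variable {X : Type*}

/-- The iterated bracket attached to a tree. -/
noncomputable def BT.br : BT X → FreeLieAlgebra ℤ X
  | BT.leaf x => FreeLieAlgebra.of ℤ x
  | BT.node u v => ⁅BT.br u, BT.br v⁆

variable [LinearOrder X]

noncomputable def LS (n : ℕ) (m : List X) : Submodule ℤ (FreeLieAlgebra ℤ X) :=
  Submodule.span ℤ {a | ∃ t : BT X, t.IsL ∧ t.word.length = n ∧ t.word < m ∧ a = t.br}

noncomputable def LA (n : ℕ) : Submodule ℤ (FreeLieAlgebra ℤ X) :=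
  Submodule.span ℤ {a | ∃ t : BT X, t.IsL ∧ t.word.length = n ∧ a = t.br}

theorem LS_mono {n : ℕ} {m m' : List X} (h : m ≤ m') : LS n m ≤ LS n m' := by
  apply Submodule.span_mono
  rintro a ⟨t, h1, h2, h3, h4⟩
  exact ⟨t, h1, h2, h3.trans_le h, h4⟩

theorem LS_le_LA {n : ℕ} {m : List X} : LS n m ≤ LA n := by
  apply Submodule.span_mono
  rintro a ⟨t, h1, h2, h3, h4⟩
  exact ⟨t, h1, h2, h4⟩

theorem lie_span_mem {R L : Type*} [CommRing R] [LieRing L] [LieAlgebra R L] {S T : Set L}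
    {M : Submodule R L} (h : ∀ s ∈ S, ∀ t ∈ T, ⁅s, t⁆ ∈ M) {a b : L}
    (ha : a ∈ Submodule.span R S) (hb : b ∈ Submodule.span R T) : ⁅a, b⁆ ∈ M := by
  induction ha using Submodule.span_induction with
  | zero => simp
  | add x y _ _ hx hy => rw [add_lie]; exact M.add_mem hx hy
  | smul c x _ hx => rw [smul_lie]; exact M.smul_mem _ hx
  | mem s hs =>
    induction hb using Submodule.span_induction with
    | zero => simp
    | add x y _ _ hx hy => rw [lie_add]; exact M.add_mem hx hy
    | smul c x _ hx => rw [lie_smul]; exact M.smul_mem _ hx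
    | mem t ht => exact h s hs t ht

theorem lie_mem_of {m : List X} {n1 n2 N : ℕ} (hN : n1 + n2 = N)
    (H : ∀ u v : BT X, u.IsL → v.IsL → u.word < v.word → v.word < m →
      u.word.length + v.word.length = N → ⁅u.br, v.br⁆ ∈ LS N m)
    {a b : FreeLieAlgebra ℤ X} (ha : a ∈ LS n1 m) (hb : b ∈ LS n2 m) : ⁅a, b⁆ ∈ LS N m := by
  refine lie_span_mem ?_ ha hb
  rintro _ ⟨u, hu, hul, hum, rfl⟩ _ ⟨v, hv, hvl, hvm, rfl⟩
  rcases lt_trichotomy u.word v.word with h | h | h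
  · exact H u v hu hv h hvm (by omega)
  · rw [hu.injective hv h]; simp
  · rw [← lie_skew]
    exact (LS N m).neg_mem (H v u hv hu h hum (by omega))

theorem key [WellFoundedLT X] (N : ℕ) : ∀ u v : BT X, u.IsL → v.IsL → u.word < v.word →
    u.word.length + v.word.length = N → ⁅u.br, v.br⁆ ∈ LS N v.word := by
  induction N using Nat.strong_induction_on with
  | _ N ihN =>
  have inner : ∀ m : {l : List X // l.length ≤ N}, ∀ u v : BT X, u.IsL → v.IsL →
      u.word < v.word → u.word.length + v.word.length = N → v.word = m.1 →
      ⁅u.br, v.br⁆ ∈ LS N v.word := by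
    intro m
    have wf := wf_bounded (X := X) N
    induction m using wf.induction with
    | _ m ihm =>
    intro u v hu hv huv hN hm
    have good : BT.Std v.word u → ⁅u.br, v.br⁆ ∈ LS N v.word := by
      intro hs
      refine Submodule.subset_span ⟨BT.node u v, ⟨hu, hv, huv, hs⟩, ?_, ?_, rfl⟩
      · simpa [BT.word] using hN
      · exact hu.lyn.append_lt hv.lyn huv
    have H : ∀ a b : BT X, a.IsL → b.IsL → a.word < b.word → b.word < v.word →
      a.word.length + b.word.length = N → ⁅a.br, b.br⁆ ∈ LS N v.word := by
      intro a b ha hb hab hbv hN'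
      refine LS_mono hbv.le ?_
      exact ihm ⟨b.word, by omega⟩ (by rw [← hm]; exact hbv) a b ha hb hab hN' rfl
    cases u with
    | leaf x => exact good trivial
    | node a b =>
      by_cases hs : v.word ≤ b.word
      · exact good hs
      rw [not_le] at hs
      have hab : a.word < b.word := hu.2.2.1
      have hlen : (BT.node a b).word.length = a.word.length + b.word.length := by simp [BT.word]
      have pa := List.length_pos_iff.2 a.word_ne_nil
      have pb := List.length_pos_iff.2 b.word_ne_nil
      have ma : a.br ∈ LS a.word.length v.word :=
        Submodule.subset_span ⟨a, hu.1, rfl, hab.trans hs, rfl⟩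
      have mb : b.br ∈ LS b.word.length v.word :=
        Submodule.subset_span ⟨b, hu.2.1, rfl, hs, rfl⟩
      have mav := ihN _ (by omega) a v hu.1 hv (hab.trans hs) rfl
      have mbv := ihN _ (by omega) b v hu.2.1 hv hs rfl
      have e : ⁅(BT.node a b).br, v.br⁆ = ⁅a.br, ⁅b.br, v.br⁆⁆ - ⁅b.br, ⁅a.br, v.br⁆⁆ := by
        simp only [BT.br]
        rw [lie_lie]
      rw [e]
      exact Submodule.sub_mem _ (lie_mem_of (by omega) H ma mbv) (lie_mem_of (by omega) H mb mav)
  intro u v hu hv huv hN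
  exact inner ⟨v.word, by omega⟩ u v hu hv huv hN rfl

theorem LA_lie [WellFoundedLT X] {n1 n2 : ℕ} {a b : FreeLieAlgebra ℤ X} (ha : a ∈ LA n1)
    (hb : b ∈ LA n2) : ⁅a, b⁆ ∈ LA (n1 + n2) := by
  refine lie_span_mem ?_ ha hb
  rintro _ ⟨u, hu, hul, rfl⟩ _ ⟨v, hv, hvl, rfl⟩
  rcases lt_trichotomy u.word v.word with h | h | h
  · exact LS_le_LA (key _ u v hu hv h (by omega))
  · rw [hu.injective hv h]; simp
  · rw [← lie_skew]
    exact Submodule.neg_mem _ (LS_le_LA (key _ v u hv hu h (by omega)))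

end Span

theorem sub_eq_top {X : Type*} (K : LieSubalgebra ℤ (FreeLieAlgebra ℤ X))
    (h : ∀ x, FreeLieAlgebra.of ℤ x ∈ K) (a : FreeLieAlgebra ℤ X) : a ∈ K := by
  let f : FreeLieAlgebra ℤ X →ₗ⁅ℤ⁆ K := FreeLieAlgebra.lift ℤ (fun x => ⟨_, h x⟩)
  have : K.incl.comp f = LieHom.id := by
    ext x
    change ((f (FreeLieAlgebra.of ℤ x) : K) : FreeLieAlgebra ℤ X) = FreeLieAlgebra.of ℤ x
    exact congrArg Subtype.val
      (FreeLieAlgebra.lift_of_apply (R := ℤ) (fun x => (⟨_, h x⟩ : K)) x)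
  have h2 := congrArg (fun g => g a) this
  change ((f a : K) : FreeLieAlgebra ℤ X) = a at h2
  rw [← h2]
  exact (f a).2

theorem mem_span_br {X : Type*} [LinearOrder X] [WellFoundedLT X] (a : FreeLieAlgebra ℤ X) :
    a ∈ Submodule.span ℤ (Set.range fun t : {t : BT X // t.IsL} => t.1.br) := by
  let K : LieSubalgebra ℤ (FreeLieAlgebra ℤ X) :=
    { Submodule.span ℤ (Set.range fun t : {t : BT X // t.IsL} => t.1.br) with
      lie_mem' := by
        intro a b ha hb
        refine lie_span_mem ?_ ha hb
        rintro _ ⟨u, rfl⟩ _ ⟨v, rfl⟩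
        have hu : u.1.br ∈ LA u.1.word.length := Submodule.subset_span ⟨u.1, u.2, rfl, rfl⟩
        have hv : v.1.br ∈ LA v.1.word.length := Submodule.subset_span ⟨v.1, v.2, rfl, rfl⟩
        refine Submodule.span_mono ?_ (LA_lie hu hv)
        rintro _ ⟨t, ht, -, rfl⟩
        exact ⟨⟨t, ht⟩, rfl⟩ }
  refine sub_eq_top K ?_ a
  intro x
  exact Submodule.subset_span ⟨⟨BT.leaf x, trivial⟩, rfl⟩

section Triang

theorem triang {k ι V α : Type*} [CommRing k] [IsDomain k] [AddCommGroup V] [Module k V]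
    [LinearOrder α] (F : ι → V →ₗ[k] k) (v : ι → V) (r : ι → α) (h1 : ∀ i, F i (v i) ≠ 0)
    (h2 : ∀ i j, j ≠ i → r i ≤ r j → F i (v j) = 0) : LinearIndependent k v := by
  rw [linearIndependent_iff]
  intro c hc
  by_contra hne
  have hs : c.support.Nonempty := Finsupp.support_nonempty_iff.2 hne
  obtain ⟨i, hi, hmin⟩ := Finset.exists_min_image c.support r hs
  have h3 := congrArg (F i) hc
  rw [Finsupp.linearCombination_apply, Finsupp.sum, map_sum, map_zero,
    Finset.sum_eq_single_of_mem i hi] at h3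
  · rw [map_smul, smul_eq_mul, mul_eq_zero] at h3
    rcases h3 with h3 | h3
    · exact (Finsupp.mem_support_iff.1 hi) h3
    · exact h1 i h3
  · intro j hj hji
    rw [map_smul, h2 i j hji (hmin j hj), smul_zero]

theorem span_mul_mem {k A : Type*} [CommRing k] [Ring A] [Algebra k A] {S T : Set A}
    {M : Submodule k A} (h : ∀ s ∈ S, ∀ t ∈ T, s * t ∈ M) {a b : A}
    (ha : a ∈ Submodule.span k S) (hb : b ∈ Submodule.span k T) : a * b ∈ M := by
  have h1 : a * b ∈ Submodule.span k S * Submodule.span k T := Submodule.mul_mem_mul ha hb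
  rw [Submodule.span_mul_span] at h1
  refine Submodule.span_le.2 ?_ h1
  rintro _ ⟨s, hs, t, ht, rfl⟩
  exact h s hs t ht

end Triang

section Assoc

abbrev AA (k X : Type*) [CommRing k] := MonoidAlgebra k (FreeMonoid X)

variable (k : Type*) {X : Type*} [CommRing k]

/-- The element of the free associative algebra given by a word. -/
noncomputable def W (z : List X) : AA k X := MonoidAlgebra.of k (FreeMonoid X) (FreeMonoid.ofList z)

theorem W_append (a b : List X) : W k (a ++ b) = W k a * W k b := by
  simp only [W, FreeMonoid.ofList_append, map_mul]

theorem W_nil : W k ([] : List X) = 1 := by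
  simp only [W, FreeMonoid.ofList_nil, map_one]

/-- The coefficient of a word, as a linear functional. -/
noncomputable def cf (z : List X) : AA k X →ₗ[k] k where
  toFun f := f.coeff (FreeMonoid.ofList z)
  map_add' f g := by simp
  map_smul' c f := by simp

theorem cf_apply (z : List X) (f : AA k X) : cf k z f = f.coeff (FreeMonoid.ofList z) := rfl

theorem cf_W_self (z : List X) : cf k z (W k z) = 1 := by
  rw [cf_apply]
  simp [W]

theorem cf_W_ne {z z' : List X} (h : z' ≠ z) : cf k z (W k z') = 0 := by
  classical
  rw [cf_apply]
  simp only [W, MonoidAlgebra.of_apply, MonoidAlgebra.coeff_single]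
  rw [Finsupp.single_apply, if_neg]
  exact fun e => h (FreeMonoid.ofList.injective e)

theorem span_W : Submodule.span k (Set.range (W k (X := X))) = ⊤ := by
  rw [eq_top_iff]
  intro f _
  induction f using MonoidAlgebra.induction_linear with
  | zero => exact Submodule.zero_mem _
  | add f g hf hg => exact Submodule.add_mem _ (hf trivial) (hg trivial)
  | single m r =>
    have : MonoidAlgebra.single m r = r • W k (FreeMonoid.toList m) := by
      simp [W]
    rw [this]
    exact Submodule.smul_mem _ _ (Submodule.subset_span ⟨_, rfl⟩)

theorem eq_zero_of_cf {f : AA k X} (h : ∀ z, cf k z f = 0) : f = 0 := by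
  ext m
  exact h (FreeMonoid.toList m)

variable [LinearOrder X]

noncomputable def Up (w : List X) : Submodule k (AA k X) :=
  Submodule.span k {f | ∃ z, z.length = w.length ∧ w < z ∧ f = W k z}

noncomputable def Ge (w : List X) : Submodule k (AA k X) :=
  Submodule.span k {f | ∃ z, z.length = w.length ∧ w ≤ z ∧ f = W k z}

theorem Up_le_Ge (w : List X) : Up k w ≤ Ge k w := by
  apply Submodule.span_mono
  rintro _ ⟨z, h1, h2, rfl⟩
  exact ⟨z, h1, h2.le, rfl⟩

theorem Ge_le_Up {w w' : List X} (hl : w'.length = w.length) (h : w < w') : Ge k w' ≤ Up k w := by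
  apply Submodule.span_mono
  rintro _ ⟨z, h1, h2, rfl⟩
  exact ⟨z, h1.trans hl, h.trans_le h2, rfl⟩

theorem W_mem_Ge (w : List X) : W k w ∈ Ge k w := Submodule.subset_span ⟨w, rfl, le_rfl, rfl⟩

theorem mem_Ge_of_sub {w : List X} {f : AA k X} {c : k} (h : f - c • W k w ∈ Up k w) :
    f ∈ Ge k w := by
  have := Submodule.add_mem _ (Up_le_Ge k w h) (Submodule.smul_mem _ c (W_mem_Ge k w))
  simpa using this

theorem cf_Up {w z : List X} (hz : z ≤ w) {f : AA k X} (hf : f ∈ Up k w) : cf k z f = 0 := by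
  have : Up k w ≤ LinearMap.ker (cf k z) := by
    apply Submodule.span_le.2
    rintro _ ⟨z', h1, h2, rfl⟩
    exact cf_W_ne k (hz.trans_lt h2).ne'
  exact this hf

theorem cf_Ge {w z : List X} (hz : z < w) {f : AA k X} (hf : f ∈ Ge k w) : cf k z f = 0 := by
  have : Ge k w ≤ LinearMap.ker (cf k z) := by
    apply Submodule.span_le.2
    rintro _ ⟨z', h1, h2, rfl⟩
    exact cf_W_ne k (hz.trans_le h2).ne'
  exact this hf

theorem append_lt_of_lt_right (a : List X) {b c : List X} (h : b < c) : a ++ b < a ++ c :=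
  (append_lt_append_iff a b c).2 h

theorem append_le_append {u v a b : List X} (h1 : u ≤ a) (hl : a.length = u.length) (h2 : v ≤ b) :
    u ++ v ≤ a ++ b := by
  rcases h1.lt_or_eq with h | rfl
  · exact (append_lt_append_of_lt h hl.le _ _).le
  · rcases h2.lt_or_eq with h | rfl
    · exact (append_lt_of_lt_right _ h).le
    · exact le_rfl

theorem Ge_mul_Ge {u v : List X} {f g : AA k X} (hf : f ∈ Ge k u) (hg : g ∈ Ge k v) :
    f * g ∈ Ge k (u ++ v) := by
  refine span_mul_mem ?_ hf hg
  rintro _ ⟨a, h1, h2, rfl⟩ _ ⟨b, h3, h4, rfl⟩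
  exact Submodule.subset_span ⟨a ++ b, by simp [h1, h3], append_le_append h2 h1 h4,
    (W_append k _ _).symm⟩

theorem Up_mul_Ge {u v : List X} {f g : AA k X} (hf : f ∈ Up k u) (hg : g ∈ Ge k v) :
    f * g ∈ Up k (u ++ v) := by
  refine span_mul_mem ?_ hf hg
  rintro _ ⟨a, h1, h2, rfl⟩ _ ⟨b, h3, h4, rfl⟩
  exact Submodule.subset_span ⟨a ++ b, by simp [h1, h3], append_lt_append_of_lt h2 h1.le _ _,
    (W_append k _ _).symm⟩

theorem W_mul_Up (u : List X) {v : List X} {g : AA k X} (hg : g ∈ Up k v) :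
    W k u * g ∈ Up k (u ++ v) := by
  have hf : W k u ∈ Submodule.span k {W k u} := Submodule.subset_span rfl
  refine span_mul_mem ?_ hf hg
  rintro _ rfl _ ⟨b, h3, h4, rfl⟩
  exact Submodule.subset_span ⟨u ++ b, by simp [h3], append_lt_of_lt_right _ h4,
    (W_append k _ _).symm⟩

end Assoc

section Phi
attribute [local instance] LieRing.ofAssociativeRing

/-- The canonical map from the free Lie ring to the free associative algebra. -/
noncomputable def phi (k : Type*) {X : Type*} [CommRing k] : FreeLieAlgebra ℤ X →ₗ⁅ℤ⁆ AA k X :=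
  FreeLieAlgebra.lift ℤ (fun x => W k [x])

variable (k : Type*) {X : Type*} [CommRing k]

theorem phi_of (x : X) : phi k (FreeLieAlgebra.of ℤ x) = W k [x] :=
  FreeLieAlgebra.lift_of_apply _ _

theorem phi_lie (a b : FreeLieAlgebra ℤ X) : phi k ⁅a, b⁆ = phi k a * phi k b - phi k b * phi k a := by
  rw [LieHom.map_lie, LieRing.of_associative_ring_bracket]

theorem phi_zsmul (n : ℤ) (a : FreeLieAlgebra ℤ X) : phi k (n • a) = n • phi k a :=
  map_zsmul (phi k : FreeLieAlgebra ℤ X →ₗ⁅ℤ⁆ AA k X) n a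

variable [LinearOrder X]

theorem phi_br {t : BT X} (ht : t.IsL) : phi k t.br - W k t.word ∈ Up k t.word := by
  induction t with
  | leaf x =>
    simp only [BT.br, BT.word, phi_of, sub_self]
    exact Submodule.zero_mem _
  | node u v ihu ihv =>
    have hu := ihu ht.1
    have hv := ihv ht.2.1
    have gu : phi k u.br ∈ Ge k u.word := mem_Ge_of_sub k (c := 1) (by simpa using hu)
    have gv : phi k v.br ∈ Ge k v.word := mem_Ge_of_sub k (c := 1) (by simpa using hv)
    simp only [BT.br, BT.word, phi_lie]
    have hlt : u.word ++ v.word < v.word ++ u.word :=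
      (ht.1.lyn.append_lt ht.2.1.lyn ht.2.2.1).trans_le (le_append _ _)
    have e : phi k u.br * phi k v.br - phi k v.br * phi k u.br - W k (u.word ++ v.word) =
      W k u.word * (phi k v.br - W k v.word) + (phi k u.br - W k u.word) * phi k v.br -
        phi k v.br * phi k u.br := by
      rw [W_append]; noncomm_ring
    rw [e]
    refine Submodule.sub_mem _ (Submodule.add_mem _ (W_mul_Up k _ hv) (Up_mul_Ge k hu gv)) ?_
    exact Ge_le_Up k (by simp [add_comm]) hlt (Ge_mul_Ge k gv gu)

theorem phi_indep [IsDomain k] :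
    LinearIndependent k (fun t : {t : BT X // t.IsL} => phi k t.1.br) := by
  refine triang (fun t => cf k t.1.word) _ (fun t => t.1.word) ?_ ?_
  · intro t
    have h := cf_Up k le_rfl (phi_br k t.2)
    rw [map_sub, cf_W_self, sub_eq_zero] at h
    rw [h]; exact one_ne_zero
  · intro i j hij hle
    have hlt : i.1.word < j.1.word :=
      lt_of_le_of_ne hle (fun e => hij (Subtype.ext (i.2.injective j.2 e).symm))
    exact cf_Ge k hlt (mem_Ge_of_sub k (c := 1) (by simpa using phi_br k j.2))

theorem phi_ker [IsDomain k] [WellFoundedLT X] {a : FreeLieAlgebra ℤ X} (ha : phi k a = 0) :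
    ∃ c : {t : BT X // t.IsL} →₀ ℤ, (c.sum fun t n => n • t.1.br) = a ∧ ∀ t, ((c t : ℤ) : k) = 0 := by
  obtain ⟨c, hc⟩ := Finsupp.mem_span_range_iff_exists_finsupp.1 (mem_span_br a)
  refine ⟨c, hc, ?_⟩
  rw [← hc, Finsupp.sum, map_sum] at ha
  intro t
  by_cases ht : t ∈ c.support
  · refine linearIndependent_iff'.1 (phi_indep k (X := X)) c.support (fun t => ((c t : ℤ) : k)) ?_ t ht
    rw [← ha]
    refine Finset.sum_congr rfl ?_
    intro t _
    rw [phi_zsmul, Int.cast_smul_eq_zsmul]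
  · rw [Finsupp.notMem_support_iff.1 ht, Int.cast_zero]

theorem free_torsionFree [WellFoundedLT X] {n : ℤ} (hn : n ≠ 0) {a : FreeLieAlgebra ℤ X}
    (h : n • a = 0) : a = 0 := by
  have h1 : phi ℤ a = 0 := by
    have := congrArg (phi ℤ) h
    rw [phi_zsmul, map_zero] at this
    apply eq_zero_of_cf
    intro z
    have h2 := congrArg (cf ℤ z) this
    rw [map_zsmul, map_zero, smul_eq_mul, mul_eq_zero] at h2
    exact h2.resolve_left hn
  obtain ⟨c, hc, h0⟩ := phi_ker ℤ h1
  have : c = 0 := by ext t; simpa using h0 t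
  rw [← hc, this, Finsupp.sum_zero_index]

theorem phi_ker_prime [WellFoundedLT X] (p : ℕ) [Fact p.Prime] {a : FreeLieAlgebra ℤ X}
    (ha : phi (ZMod p) a = 0) : ∃ b, a = (p : ℤ) • b := by
  obtain ⟨c, hc, h0⟩ := phi_ker (ZMod p) ha
  choose d hd using fun t => (ZMod.intCast_zmod_eq_zero_iff_dvd _ p).1 (h0 t)
  refine ⟨∑ t ∈ c.support, d t • t.1.br, ?_⟩
  rw [← hc, Finsupp.sum, Finset.smul_sum]
  refine Finset.sum_congr rfl fun t _ => ?_
  rw [smul_smul, ← hd]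

theorem lead_exists (p : ℕ) {n : ℕ} {a : FreeLieAlgebra ℤ X} (ha : a ∈ LA n)
    (hp : ¬ ∃ b, a = (p : ℤ) • b) :
    ∃ (w : List X) (c : ℤ) (σ : FreeLieAlgebra ℤ X), Lyn w ∧ w.length = n ∧ ¬ (p : ℤ) ∣ c ∧
      ∀ (k : Type) [CommRing k],
        phi k a - (c : k) • W k w - (p : k) • phi k σ ∈ Up k w := by
  have ha' : a ∈ Submodule.span ℤ
      (Set.range fun t : {t : BT X // t.IsL ∧ t.word.length = n} => t.1.br) := by
    refine Submodule.span_mono ?_ ha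
    rintro _ ⟨t, h1, h2, rfl⟩
    exact ⟨⟨t, h1, h2⟩, rfl⟩
  obtain ⟨c, hc⟩ := Finsupp.mem_span_range_iff_exists_finsupp.1 ha'
  classical
  let S := c.support.filter (fun t => ¬ (p : ℤ) ∣ c t)
  let S' := c.support.filter (fun t => ¬ ¬ (p : ℤ) ∣ c t)
  have hS : (∑ t ∈ S, c t • t.1.br) + (∑ t ∈ S', c t • t.1.br) = a := by
    rw [← hc, Finsupp.sum]
    exact Finset.sum_filter_add_sum_filter_not _ _ _
  have hS' : ∃ σ, (∑ t ∈ S', c t • t.1.br) = (p : ℤ) • σ := by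
    refine ⟨∑ t ∈ S', (c t / p) • t.1.br, ?_⟩
    rw [Finset.smul_sum]
    refine Finset.sum_congr rfl fun t ht => ?_
    rw [smul_smul, Int.mul_ediv_cancel' (not_not.1 (Finset.mem_filter.1 ht).2)]
  obtain ⟨σ, hσ⟩ := hS'
  have hne : S.Nonempty := by
    rw [Finset.nonempty_iff_ne_empty]
    intro h
    rw [h, Finset.sum_empty, zero_add] at hS
    exact hp ⟨σ, hS.symm.trans hσ⟩
  obtain ⟨t0, ht0, hmin⟩ := Finset.exists_min_image S (fun t => t.1.word) hne
  refine ⟨t0.1.word, c t0, σ, t0.2.1.lyn, t0.2.2, (Finset.mem_filter.1 ht0).2, ?_⟩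
  intro k _
  have e : phi k a - ((c t0 : ℤ) : k) • W k t0.1.word - (p : k) • phi k σ =
      (c t0 : k) • (phi k t0.1.br - W k t0.1.word) +
        ∑ t ∈ S.erase t0, (c t : k) • phi k t.1.br := by
    rw [← hS, hσ, map_add, map_sum, phi_zsmul]
    simp only [phi_zsmul, ← Int.cast_smul_eq_zsmul k]
    rw [← Finset.add_sum_erase _ _ ht0, smul_sub, Int.cast_natCast]
    abel
  rw [e]
  refine Submodule.add_mem _ (Submodule.smul_mem _ _ (phi_br k t0.2.1)) ?_
  refine Submodule.sum_mem _ fun t ht => Submodule.smul_mem _ _ ?_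
  rw [Finset.mem_erase] at ht
  have hlt : t0.1.word < t.1.word := lt_of_le_of_ne (hmin t ht.2)
    (fun e => ht.1 (Subtype.ext (t0.2.1.injective t.2.1 e).symm))
  exact Ge_le_Up k (t.2.2.trans t0.2.2.symm) hlt
    (mem_Ge_of_sub k (c := 1) (by simpa using phi_br k t.2.1))

end Phi

section Rewrite
variable {X : Type*} [LinearOrder X]

/-- Words not containing `w` as a factor. -/
def Avoid (w s : List X) : Prop := ¬ ∃ a b, s = a ++ w ++ b

theorem first_occ_aux {w : List X} (hw : Lyn w) {s t b b' : List X} (ht : Avoid w (s ++ t))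
    (h : w ++ b = t ++ (w ++ b')) : t = [] := by
  rcases List.append_eq_append_iff.1 h with ⟨q, h1, h2⟩ | ⟨q, h1, h2⟩
  · exact absurd ⟨s, q, by rw [h1, List.append_assoc]⟩ ht
  · by_cases hq : q = []
    · subst hq
      simp only [List.append_nil] at h1
      exact absurd ⟨s, [], by simp [h1]⟩ ht
    · rcases List.append_eq_append_iff.1 h2 with ⟨x, h3, h4⟩ | ⟨x, h3, h4⟩
      · have hl1 := congrArg List.length h1
        have hl2 := congrArg List.length h3
        simp at hl1 hl2
        exact List.length_eq_zero_iff.1 (by omega)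
      · have := hw.unbordered h3 h1 hq
        subst this
        rw [List.append_nil] at h3
        rw [← h3] at h1
        have := congrArg List.length h1
        simp at this
        exact this

theorem first_occ {w : List X} (hw : Lyn w) {s s' b b' : List X} (hs : Avoid w s)
    (hs' : Avoid w s') (h : s ++ w ++ b = s' ++ w ++ b') : s = s' ∧ b = b' := by
  have : s = s' := by
    rw [List.append_assoc, List.append_assoc] at h
    rcases List.append_eq_append_iff.1 h with ⟨t, h1, h2⟩ | ⟨t, h1, h2⟩
    · subst h1
      rw [first_occ_aux hw hs' h2, List.append_nil]
    · subst h1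
      rw [first_occ_aux hw hs h2, List.append_nil]
  subst this
  exact ⟨rfl, List.append_cancel_left h⟩

theorem rewrite_induction [Finite X] (w : List X) (Q : List X → Prop) (h0 : ∀ s, Avoid w s → Q s)
    (h1 : ∀ a b, (∀ z : List X, z.length < (a ++ w ++ b).length → Q z) →
      (∀ w' : List X, w'.length = w.length → w < w' → Q (a ++ w' ++ b)) → Q (a ++ w ++ b))
    (z : List X) : Q z := by
  have main : ∀ n, ∀ z : List X, z.length = n → Q z := by
    intro n
    induction n using Nat.strong_induction_on with
    | _ n ih =>
    have hfin : Finite {z : List X // z.length = n} := List.finite_length_eq X n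
    have wf : WellFounded (fun a b : {z : List X // z.length = n} => b < a) :=
      wellFounded_gt
    intro z hz
    have : ∀ z : {z : List X // z.length = n}, Q z.1 := by
      intro z
      induction z using wf.induction with
      | _ z ihz =>
      by_cases hA : Avoid w z.1
      · exact h0 _ hA
      · obtain ⟨a, b, hab⟩ := not_not.1 hA
        have hzl := z.2
        rw [hab]
        apply h1
        · intro y hy
          rw [← hab, hzl] at hy
          exact ih _ hy y rfl
        · intro w' hl hw'
          refine ihz ⟨a ++ w' ++ b, ?_⟩ ?_
          · rw [← hzl, hab]; simp [hl]
          · change z.1 < a ++ w' ++ b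
            rw [hab, List.append_assoc, List.append_assoc]
            exact append_lt_of_lt_right _ (append_lt_append_of_lt hw' hl.le _ _)
    exact this ⟨z, hz⟩
  exact main _ z rfl

end Rewrite

section Ideal
variable {k X : Type*} [Field k] [LinearOrder X]

/-- iterated commutators -/
noncomputable def gg (r : AA k X) : List X → AA k X
  | [] => r
  | x :: s => W k [x] * gg r s - gg r s * W k [x]

theorem srb_lead {w : List X} {c : k} {r : AA k X} (hr : r - c • W k w ∈ Up k w) (s b : List X) :
    W k s * r * W k b - c • W k (s ++ w ++ b) ∈ Up k (s ++ w ++ b) := by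
  have := Up_mul_Ge k (W_mul_Up k s hr) (W_mem_Ge k b)
  convert this using 1
  simp only [W_append, mul_sub, sub_mul, mul_smul_comm, smul_mul_assoc]

theorem indep1 {w : List X} (hw : Lyn w) {c : k} (hc : c ≠ 0) {r : AA k X}
    (hr : r - c • W k w ∈ Up k w) :
    LinearIndependent k (fun i : {s : List X // Avoid w s} × List X => W k i.1.1 * r * W k i.2) := by
  refine triang (fun i => cf k (i.1.1 ++ w ++ i.2)) _ (fun i => i.1.1 ++ w ++ i.2) ?_ ?_
  · intro i
    have h := cf_Up k le_rfl (srb_lead hr i.1.1 i.2)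
    rw [map_sub, map_smul, cf_W_self, sub_eq_zero] at h
    rw [h]; simpa using hc
  · intro i j hij hle
    have hlt : i.1.1 ++ w ++ i.2 < j.1.1 ++ w ++ j.2 := by
      refine lt_of_le_of_ne hle (fun e => hij ?_)
      have := first_occ hw i.1.2 j.1.2 e
      exact (Prod.ext (Subtype.ext this.1) this.2).symm
    exact cf_Ge k hlt (mem_Ge_of_sub k (srb_lead hr j.1.1 j.2))

noncomputable def DD (w : List X) (r : AA k X) (n : ℕ) : Submodule k (AA k X) :=
  Submodule.span k ((fun i : {s : List X // Avoid w s} × List X => W k i.1.1 * r * W k i.2) ''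
    {i | i.1.1.length < n})

theorem DD_mono (w : List X) (r : AA k X) {n m : ℕ} (h : n ≤ m) : DD w r n ≤ DD w r m := by
  apply Submodule.span_mono
  apply Set.image_mono
  intro i hi
  exact lt_of_lt_of_le hi h

theorem mul_mem_of_W {M : Submodule k (AA k X)} {f : AA k X} (h : ∀ b, f * W k b ∈ M) (g : AA k X) :
    f * g ∈ M := by
  have hg : g ∈ Submodule.span k (Set.range (W k (X := X))) := by rw [span_W]; trivial
  refine span_mul_mem ?_ (Submodule.subset_span (Set.mem_singleton f)) hg
  rintro _ rfl _ ⟨b, rfl⟩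
  exact h b

theorem mem_DD [Finite X] {w : List X} (hw : w ≠ []) {c : k} (hc : c ≠ 0) {r : AA k X}
    (hr : r - c • W k w ∈ Up k w) (z : List X) :
    ∀ b, W k z * r * W k b ∈ DD w r (z.length + 1) := by
  refine rewrite_induction w (fun z => ∀ b, W k z * r * W k b ∈ DD w r (z.length + 1)) ?_ ?_ z
  · intro s hs b
    exact Submodule.subset_span ⟨(⟨s, hs⟩, b), Nat.lt_succ_self _, rfl⟩
  · intro a b0 hshort hbig b
    have hwl := List.length_pos_iff.2 hw
    have e : W k (a ++ w ++ b0) * r * W k b = c⁻¹ • (W k a * r * (W k b0 * r * W k b) -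
        W k a * (r - c • W k w) * (W k b0 * r * W k b)) := by
      rw [← sub_mul, ← mul_sub, sub_sub_cancel, mul_smul_comm, smul_mul_assoc, smul_smul,
        inv_mul_cancel₀ hc, one_smul, W_append, W_append]
      simp only [mul_assoc]
    rw [e]
    refine Submodule.smul_mem _ _ (Submodule.sub_mem _ ?_ ?_)
    · refine mul_mem_of_W (fun b' => ?_) _
      refine DD_mono _ _ ?_ (hshort a (by simp only [List.length_append]; omega) b')
      simp only [List.length_append]; omega
    · have hu : W k a * (r - c • W k w) ∈
          Submodule.span k ((fun f => W k a * f) '' {f | ∃ z, z.length = w.length ∧ w < z ∧ f = W k z}) := by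
        have := Submodule.mem_map_of_mem (f := LinearMap.mulLeft k (W k a)) hr
        rw [Up, Submodule.map_span] at this
        exact this
      refine span_mul_mem ?_ hu (Submodule.subset_span (Set.mem_singleton _))
      rintro _ ⟨_, ⟨z, hz1, hz2, rfl⟩, rfl⟩ _ rfl
      have := hbig z hz1 hz2 b
      have e2 : W k a * W k z * (W k b0 * r * W k b) = W k (a ++ z ++ b0) * r * W k b := by
        rw [W_append, W_append]; simp only [mul_assoc]
      have e3 : (a ++ w ++ b0).length + 1 = (a ++ z ++ b0).length + 1 := by
        simp only [List.length_append, hz1]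
      rw [e3]
      change W k a * W k z * (W k b0 * r * W k b) ∈ _
      rw [e2]
      exact this

noncomputable def EE (r : AA k X) (n : ℕ) : Submodule k (AA k X) :=
  Submodule.span k {f | ∃ z b : List X, z.length < n ∧ f = W k z * r * W k b}

theorem EE_mono (r : AA k X) {n m : ℕ} (h : n ≤ m) : EE r n ≤ EE r m := by
  apply Submodule.span_mono
  rintro _ ⟨z, b, h1, rfl⟩
  exact ⟨z, b, h1.trans_le h, rfl⟩

theorem EE_mul (r : AA k X) {n : ℕ} (b : List X) {f : AA k X} (hf : f ∈ EE r n) :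
    f * W k b ∈ EE r n := by
  refine span_mul_mem ?_ hf (Submodule.subset_span (Set.mem_singleton _))
  rintro _ ⟨z, b', h1, rfl⟩ _ rfl
  exact Submodule.subset_span ⟨z, b' ++ b, h1, by simp only [W_append, mul_assoc]⟩

theorem mul_EE (r : AA k X) {n : ℕ} (x : X) {f : AA k X} (hf : f ∈ EE r n) :
    W k [x] * f ∈ EE r (n + 1) := by
  refine span_mul_mem ?_ (Submodule.subset_span (Set.mem_singleton _)) hf
  rintro _ rfl _ ⟨z, b', h1, rfl⟩
  refine Submodule.subset_span ⟨x :: z, b', by simpa using h1, ?_⟩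
  have e : W k (x :: z) = W k [x] * W k z := W_append k [x] z
  rw [e]
  simp only [mul_assoc]

theorem gg_sub (r : AA k X) (z : List X) : gg r z - W k z * r ∈ EE r z.length := by
  induction z with
  | nil => simp [gg, W_nil]
  | cons x s ih =>
    have h1 : gg r s ∈ EE r (s.length + 1) := by
      have h2 : W k s * r ∈ EE r (s.length + 1) :=
        Submodule.subset_span ⟨s, [], Nat.lt_succ_self _, by rw [W_nil, mul_one]⟩
      have := Submodule.add_mem _ (EE_mono r (Nat.le_succ _) ih) h2
      simpa using this
    have e : gg r (x :: s) - W k (x :: s) * r =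
        W k [x] * (gg r s - W k s * r) - gg r s * W k [x] := by
      rw [← List.singleton_append, W_append, List.singleton_append, gg]
      noncomm_ring
    rw [e]
    exact Submodule.sub_mem _ (mul_EE r x ih) (EE_mul r _ h1)

theorem EE_le_DD [Finite X] {w : List X} (hw : w ≠ []) {c : k} (hc : c ≠ 0) {r : AA k X}
    (hr : r - c • W k w ∈ Up k w) (n : ℕ) : EE r n ≤ DD w r n := by
  apply Submodule.span_le.2
  rintro _ ⟨z, b, h1, rfl⟩
  exact DD_mono _ _ h1 (mem_DD hw hc hr z b)

theorem indep2 [Finite X] {w : List X} (hw : Lyn w) {c : k} (hc : c ≠ 0) {r : AA k X}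
    (hr : r - c • W k w ∈ Up k w) :
    LinearIndependent k (fun i : {s : List X // Avoid w s} × List X => gg r i.1.1 * W k i.2) := by
  have hi := indep1 hw hc hr
  set v := (fun i : {s : List X // Avoid w s} × List X => W k i.1.1 * r * W k i.2) with hv
  have hd : ∀ i : {s : List X // Avoid w s} × List X, ∃ d ∈ Finsupp.supported k k
      {j : {s : List X // Avoid w s} × List X | j.1.1.length < i.1.1.length},
      Finsupp.linearCombination k v d = gg r i.1.1 * W k i.2 - v i := by
    intro i
    have h1 : gg r i.1.1 * W k i.2 - v i ∈ DD w r i.1.1.length := by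
      have := EE_mul r i.2 (gg_sub r i.1.1)
      rw [sub_mul] at this
      exact EE_le_DD hw.1 hc hr _ this
    exact (Finsupp.mem_span_image_iff_linearCombination k).1 h1
  choose d hd1 hd2 using hd
  have hu : LinearIndependent k
      (fun i : {s : List X // Avoid w s} × List X => Finsupp.single i (1 : k) + d i) := by
    have hz : ∀ i j : {s : List X // Avoid w s} × List X, j.1.1.length ≤ i.1.1.length →
        d j i = 0 := by
      intro i j hij
      by_contra h
      have := (Finsupp.mem_supported k (d j)).1 (hd1 j) (Finsupp.mem_support_iff.2 h)
      exact absurd this (not_lt.2 hij)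
    refine triang (fun i => Finsupp.lapply i) _ (fun i => OrderDual.toDual i.1.1.length) ?_ ?_
    · intro i
      simp [hz i i le_rfl]
    · intro i j hji hle
      have : j.1.1.length ≤ i.1.1.length := hle
      simp [hz i j this, Finsupp.single_eq_of_ne hji.symm]
  have h3 := hu.map' (Finsupp.linearCombination k v) (LinearMap.ker_eq_bot.2 hi)
  have e : (fun i : {s : List X // Avoid w s} × List X => gg r i.1.1 * W k i.2) =
      ⇑(Finsupp.linearCombination k v) ∘ (fun i => Finsupp.single i (1 : k) + d i) := by
    ext1 i
    simp [hd2]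
  rw [e]
  exact h3

end Ideal

section FreeSub
variable {k X : Type*} [Field k]

noncomputable def FF {G : Type*} (D : G → AA k X →ₗ[k] AA k X) : List G → AA k X →ₗ[k] k
  | [] => cf k []
  | s :: V => FF D V ∘ₗ D s

theorem gprod_indep {G : Type*} (g : G → AA k X)
    (hg : LinearIndependent k (fun i : G × List X => g i.1 * W k i.2))
    (h0 : ∀ s b, cf k [] (g s * W k b) = 0) :
    LinearIndependent k (fun V : List G => (V.map g).prod) := by
  classical
  obtain ⟨T, hT⟩ := LinearMap.exists_leftInverse_of_injective
    (Finsupp.linearCombination k (fun i : G × List X => g i.1 * W k i.2))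
    (LinearMap.ker_eq_bot.2 hg)
  let D : G → AA k X →ₗ[k] AA k X := fun s =>
    (Finsupp.linearCombination k (fun i : G × List X => if i.1 = s then W k i.2 else 0)) ∘ₗ T
  have ext : ∀ f f' : AA k X →ₗ[k] AA k X, (∀ b, f (W k b) = f' (W k b)) → f = f' := by
    intro f f' h
    refine LinearMap.ext_on_range (span_W k) h
  have hDW : ∀ s s' b, D s (g s' * W k b) = if s' = s then W k b else 0 := by
    intro s s' b
    have h1 := congrArg (fun f => f (Finsupp.single (s', b) 1)) hT
    simp only [LinearMap.comp_apply, Finsupp.linearCombination_single, one_smul,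
      LinearMap.id_apply] at h1
    simp only [D, LinearMap.comp_apply, h1, Finsupp.linearCombination_single, one_smul]
  have hD1 : ∀ s a, D s (g s * a) = a := by
    intro s a
    have := ext (D s ∘ₗ LinearMap.mulLeft k (g s)) LinearMap.id (by
      intro b; simp [hDW])
    exact congrArg (fun f => f a) this
  have hD2 : ∀ s s' a, s' ≠ s → D s (g s' * a) = 0 := by
    intro s s' a hs
    have := ext (D s ∘ₗ LinearMap.mulLeft k (g s')) 0 (by
      intro b; simp [hDW, hs])
    exact congrArg (fun f => f a) this
  have h0' : ∀ s a, cf k [] (g s * a) = 0 := by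
    intro s a
    have : (cf k []) ∘ₗ LinearMap.mulLeft k (g s) = 0 :=
      LinearMap.ext_on_range (span_W k) (by intro b; simp [h0])
    exact congrArg (fun f => f a) this
  refine triang (FF D) _ List.length ?_ ?_
  · intro V
    have : FF D V (V.map g).prod = 1 := by
      induction V with
      | nil =>
        simp only [FF, List.map_nil, List.prod_nil]
        rw [← W_nil, cf_W_self]
      | cons s V ih =>
        simp only [FF, List.map_cons, List.prod_cons, LinearMap.comp_apply, hD1, ih]
    rw [this]; exact one_ne_zero
  · intro V
    induction V with
    | nil =>
      intro V' hne _
      cases V' with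
      | nil => exact absurd rfl hne
      | cons s V' => simp only [FF, List.map_cons, List.prod_cons, h0']
    | cons s V ih =>
      intro V' hne hle
      cases V' with
      | nil => simp at hle
      | cons s' V' =>
        simp only [FF, List.map_cons, List.prod_cons, LinearMap.comp_apply]
        by_cases hs : s' = s
        · subst hs
          rw [hD1]
          exact ih V' (fun h => hne (by rw [h])) (by simpa using hle)
        · rw [hD2 _ _ _ hs, map_zero]

noncomputable def Psi {G : Type*} (g : G → AA k X) : AA k G →ₐ[k] AA k X :=
  MonoidAlgebra.lift k (AA k X) (FreeMonoid G) (FreeMonoid.lift g)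

theorem Psi_W {G : Type*} (g : G → AA k X) (V : List G) : Psi g (W k V) = (V.map g).prod := by
  rw [Psi, W, MonoidAlgebra.lift_of, FreeMonoid.lift_apply]
  rfl

theorem Psi_inj {G : Type*} (g : G → AA k X)
    (hg : LinearIndependent k (fun V : List G => (V.map g).prod)) {a : AA k G}
    (ha : Psi g a = 0) : a = 0 := by
  have h1 : a ∈ Submodule.span k (Set.range (W k (X := G))) := by rw [span_W]; trivial
  obtain ⟨c, hc⟩ := Finsupp.mem_span_range_iff_exists_finsupp.1 h1
  have h2 : Finsupp.linearCombination k (fun V : List G => (V.map g).prod) c = 0 := by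
    rw [← ha, ← hc, Finsupp.linearCombination_apply, Finsupp.sum, Finsupp.sum, map_sum]
    refine Finset.sum_congr rfl fun V _ => ?_
    rw [map_smul, Psi_W]
  have h3 := linearIndependent_iff.1 hg c h2
  rw [← hc, h3, Finsupp.sum_zero_index]

end FreeSub

section FreeSub2
variable {k X : Type*} [Field k] [LinearOrder X]

theorem EE_cf {w : List X} (hw : w ≠ []) {c : k} {r : AA k X}
    (hr : r - c • W k w ∈ Up k w) {n : ℕ} {f : AA k X} (hf : f ∈ EE r n) : cf k [] f = 0 := by
  have h : EE r n ≤ LinearMap.ker (cf k []) := by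
    apply Submodule.span_le.2
    rintro _ ⟨z, b, -, rfl⟩
    refine cf_Ge k ?_ (mem_Ge_of_sub k (srb_lead hr z b))
    exact lt_append_of_ne [] (by simp [hw])
  exact h hf

theorem gg_mem_EE (r : AA k X) (s : List X) : gg r s ∈ EE r (s.length + 1) := by
  have h2 : W k s * r ∈ EE r (s.length + 1) :=
    Submodule.subset_span ⟨s, [], Nat.lt_succ_self _, by rw [W_nil, mul_one]⟩
  have := Submodule.add_mem _ (EE_mono r (Nat.le_succ _) (gg_sub r s)) h2
  simpa using this

theorem Psi_gg_inj [Finite X] {w : List X} (hw : Lyn w) {c : k} (hc : c ≠ 0) {r : AA k X}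
    (hr : r - c • W k w ∈ Up k w) {a : AA k {s : List X // Avoid w s}}
    (ha : Psi (fun s : {s : List X // Avoid w s} => gg r s.1) a = 0) : a = 0 := by
  have h1 := indep2 hw hc hr
  refine Psi_inj (fun s : {s : List X // Avoid w s} => gg r s.1)
    (gprod_indep (fun s : {s : List X // Avoid w s} => gg r s.1) h1 ?_) ha
  intro s b
  exact EE_cf hw.1 hr (EE_mul r b (gg_mem_EE r s.1))

end FreeSub2

section NoOrder

theorem exists_order (X : Type*) : ∃ _ : LinearOrder X, WellFoundedLT X := by
  classical
  exact ⟨linearOrderOfSTO (WellOrderingRel (α := X)),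
    ⟨(inferInstance : IsWellFounded X WellOrderingRel).wf⟩⟩

theorem free_torsionFree' {X : Type*} {n : ℤ} (hn : n ≠ 0) {a : FreeLieAlgebra ℤ X}
    (h : n • a = 0) : a = 0 := by
  obtain ⟨_, _⟩ := exists_order X
  exact free_torsionFree hn h

theorem phi_ker_prime' {X : Type*} (p : ℕ) [Fact p.Prime] {a : FreeLieAlgebra ℤ X}
    (h : phi (ZMod p) a = 0) : ∃ b, a = (p : ℤ) • b := by
  obtain ⟨_, _⟩ := exists_order X
  exact phi_ker_prime p h

end NoOrder

section Adw
variable {X : Type*}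

/-- iterated adjoint action of generators -/
noncomputable def adw : List X → FreeLieAlgebra ℤ X →ₗ[ℤ] FreeLieAlgebra ℤ X
  | [] => LinearMap.id
  | x :: z => (LieModule.toEnd ℤ (FreeLieAlgebra ℤ X) (FreeLieAlgebra ℤ X)
      (FreeLieAlgebra.of ℤ x) : FreeLieAlgebra ℤ X →ₗ[ℤ] FreeLieAlgebra ℤ X) ∘ₗ adw z

theorem adw_nil (y : FreeLieAlgebra ℤ X) : adw [] y = y := rfl

theorem adw_cons (x : X) (z : List X) (y : FreeLieAlgebra ℤ X) :
    adw (x :: z) y = ⁅FreeLieAlgebra.of ℤ x, adw z y⁆ := rfl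

theorem adw_append (a b : List X) (y : FreeLieAlgebra ℤ X) : adw (a ++ b) y = adw a (adw b y) := by
  induction a with
  | nil => rfl
  | cons x a ih => rw [List.cons_append, adw_cons, adw_cons, ih]

theorem adw_lie_mem (K : LieSubalgebra ℤ (FreeLieAlgebra ℤ X)) {ρ : FreeLieAlgebra ℤ X} {n : ℕ}
    (h : ∀ z : List X, z.length < n → adw z ρ ∈ K) (a : List X) : ∀ a0 b : List X,
    a.length + a0.length < n → a.length + b.length < n → adw a ⁅adw a0 ρ, adw b ρ⁆ ∈ K := by
  induction a using List.reverseRecOn with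
  | nil =>
    intro a0 b h1 h2
    simp only [List.length_nil, zero_add] at h1 h2
    exact K.lie_mem (h _ h1) (h _ h2)
  | append_singleton a x ih =>
    intro a0 b h1 h2
    simp only [List.length_append, List.length_singleton] at h1 h2
    have e : adw (a ++ [x]) ⁅adw a0 ρ, adw b ρ⁆ =
        adw a ⁅adw (x :: a0) ρ, adw b ρ⁆ + adw a ⁅adw a0 ρ, adw (x :: b) ρ⁆ := by
      rw [adw_append, ← map_add, adw_cons, adw_nil, adw_cons, adw_cons, leibniz_lie]
    rw [e]
    refine K.add_mem (ih _ _ ?_ ?_) (ih _ _ ?_ ?_) <;> (try simp only [List.length_cons]) <;> omega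

/-- The action of the free associative algebra on the free Lie ring. -/
noncomputable def AD : AA ℤ X →ₐ[ℤ] Module.End ℤ (FreeLieAlgebra ℤ X) :=
  MonoidAlgebra.lift ℤ _ (FreeMonoid X) (FreeMonoid.lift (fun x => adw [x]))

theorem AD_W (z : List X) : AD (W ℤ z) = adw z := by
  rw [AD, W, MonoidAlgebra.lift_of, FreeMonoid.lift_apply]
  change (z.map (fun x => (adw [x] : Module.End ℤ (FreeLieAlgebra ℤ X)))).prod = _
  induction z with
  | nil => rfl
  | cons x z ih => rw [List.map_cons, List.prod_cons, ih]; rfl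

theorem AD_phi (a y : FreeLieAlgebra ℤ X) : AD (phi ℤ a) y = ⁅a, y⁆ := by
  let K : LieSubalgebra ℤ (FreeLieAlgebra ℤ X) :=
    { carrier := {a | ∀ y, AD (phi ℤ a) y = ⁅a, y⁆}
      add_mem' := by
        intro a b ha hb y
        rw [map_add, map_add, LinearMap.add_apply, ha, hb, add_lie]
      zero_mem' := by intro y; rw [map_zero, map_zero, zero_lie]; rfl
      smul_mem' := by
        intro n a ha y
        rw [phi_zsmul, map_smul, LinearMap.smul_apply, ha, smul_lie]
      lie_mem' := by
        intro a b ha hb y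
        rw [phi_lie, map_sub, map_mul, map_mul, LinearMap.sub_apply, Module.End.mul_apply,
          Module.End.mul_apply, hb, ha, ha, hb, lie_lie] }
  refine sub_eq_top K ?_ a y
  intro x y
  rw [phi_of, AD_W]; rfl

theorem phi_adw (k : Type*) [Field k] [LinearOrder X] (z : List X) (ρ : FreeLieAlgebra ℤ X) :
    phi k (adw z ρ) = gg (phi k ρ) z := by
  induction z with
  | nil => rfl
  | cons x z ih => rw [adw_cons, phi_lie, phi_of, ih, gg]

theorem mem_lieSpan_iff (ρ : FreeLieAlgebra ℤ X) (y : FreeLieAlgebra ℤ X) :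
    y ∈ LieSubmodule.lieSpan ℤ (FreeLieAlgebra ℤ X) {ρ} ↔
      y ∈ Submodule.span ℤ (Set.range (fun z : List X => adw z ρ)) := by
  set S := Submodule.span ℤ (Set.range (fun z : List X => adw z ρ)) with hS
  constructor
  · let K : LieSubalgebra ℤ (FreeLieAlgebra ℤ X) :=
      { carrier := {a | ∀ y ∈ S, ⁅a, y⁆ ∈ S}
        add_mem' := by
          intro a b ha hb y hy
          rw [add_lie]; exact S.add_mem (ha y hy) (hb y hy)
        zero_mem' := by intro y _; rw [zero_lie]; exact S.zero_mem
        smul_mem' := by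
          intro n a ha y hy
          rw [smul_lie]; exact S.smul_mem _ (ha y hy)
        lie_mem' := by
          intro a b ha hb y hy
          rw [lie_lie]; exact S.sub_mem (ha _ (hb y hy)) (hb _ (ha y hy)) }
    have hK : ∀ a : FreeLieAlgebra ℤ X, ∀ y ∈ S, ⁅a, y⁆ ∈ S := by
      intro a
      refine sub_eq_top K ?_ a
      intro x y hy
      induction hy using Submodule.span_induction with
      | mem y hy =>
        obtain ⟨z, rfl⟩ := hy
        exact Submodule.subset_span ⟨x :: z, rfl⟩
      | zero => rw [lie_zero]; exact S.zero_mem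
      | add y y' _ _ h1 h2 => rw [lie_add]; exact S.add_mem h1 h2
      | smul n y _ h1 => rw [lie_smul]; exact S.smul_mem _ h1
    let M : LieSubmodule ℤ (FreeLieAlgebra ℤ X) (FreeLieAlgebra ℤ X) :=
      { S with lie_mem := fun {a y} hy => hK a y hy }
    intro hy
    have : LieSubmodule.lieSpan ℤ (FreeLieAlgebra ℤ X) {ρ} ≤ M := by
      rw [LieSubmodule.lieSpan_le]
      rintro _ rfl
      exact Submodule.subset_span ⟨[], rfl⟩
    exact this hy
  · intro hy
    have : S ≤ (LieSubmodule.lieSpan ℤ (FreeLieAlgebra ℤ X) {ρ}).toSubmodule := by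
      apply Submodule.span_le.2
      rintro _ ⟨z, rfl⟩
      induction z with
      | nil => exact LieSubmodule.subset_lieSpan rfl
      | cons x z ih => exact LieSubmodule.lie_mem _ (x := FreeLieAlgebra.of ℤ x) ih
    exact this hy

end Adw

section Main
variable {X : Type*} [LinearOrder X] [Finite X]

theorem core (p : ℕ) [hpp : Fact p.Prime] {n : ℕ} {ρ : FreeLieAlgebra ℤ X} (hρ : ρ ∈ LA n)
    (hp : ¬ ∃ b, ρ = (p : ℤ) • b) {a : FreeLieAlgebra ℤ X}
    (ha : (p : ℤ) • a ∈ LieSubmodule.lieSpan ℤ (FreeLieAlgebra ℤ X) {ρ}) :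
    a ∈ LieSubmodule.lieSpan ℤ (FreeLieAlgebra ℤ X) {ρ} := by
  obtain ⟨w, c, σ, hw, hwn, hpc, hlead⟩ := lead_exists p hρ hp
  set I := LieSubmodule.lieSpan ℤ (FreeLieAlgebra ℤ X) {ρ} with hI
  have hadI : ∀ z, adw z ρ ∈ I := fun z => (mem_lieSpan_iff ρ _).2 (Submodule.subset_span ⟨z, rfl⟩)
  let G := {s : List X // Avoid w s}
  let θ : FreeLieAlgebra ℤ G →ₗ⁅ℤ⁆ FreeLieAlgebra ℤ X :=
    FreeLieAlgebra.lift ℤ (fun s : G => adw s.1 ρ)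
  have hθ : ∀ s : G, θ (FreeLieAlgebra.of ℤ s) = adw s.1 ρ := fun s =>
    FreeLieAlgebra.lift_of_apply (R := ℤ) (fun s : G => adw s.1 ρ) s
  have hIl : ∀ x y : FreeLieAlgebra ℤ X, y ∈ I → ⁅x, y⁆ ∈ I := fun x y hy => LieSubmodule.lie_mem I hy
  have hIr : ∀ x y : FreeLieAlgebra ℤ X, x ∈ I → ⁅x, y⁆ ∈ I := by
    intro x y hx
    rw [← lie_skew]
    exact I.toSubmodule.neg_mem (hIl _ _ hx)
  have hθI : ∀ f, θ f ∈ I := by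
    let K : LieSubalgebra ℤ (FreeLieAlgebra ℤ G) :=
      { Submodule.comap (θ : FreeLieAlgebra ℤ G →ₗ[ℤ] FreeLieAlgebra ℤ X) I.toSubmodule with
        lie_mem' := by
          intro f g hf hg
          change θ ⁅f, g⁆ ∈ I
          rw [LieHom.map_lie]
          exact hIl _ _ hg }
    intro f
    refine sub_eq_top K ?_ f
    intro s
    change θ (FreeLieAlgebra.of ℤ s) ∈ I
    rw [hθ]; exact hadI _
  let N : LieSubalgebra ℤ (FreeLieAlgebra ℤ X) :=
    { carrier := {y | ∃ f, ∃ i ∈ I, y = θ f + (p : ℤ) • i}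
      add_mem' := by
        rintro _ _ ⟨f, i, hi, rfl⟩ ⟨g, j, hj, rfl⟩
        exact ⟨f + g, i + j, I.add_mem hi hj, by rw [map_add, smul_add]; abel⟩
      zero_mem' := ⟨0, 0, I.zero_mem, by rw [map_zero, smul_zero, add_zero]⟩
      smul_mem' := by
        rintro m _ ⟨f, i, hi, rfl⟩
        exact ⟨m • f, m • i, I.smul_mem _ hi, by
          rw [map_zsmul, smul_add, smul_comm]⟩
      lie_mem' := by
        rintro _ _ ⟨f, i, hi, rfl⟩ ⟨g, j, hj, rfl⟩
        refine ⟨⁅f, g⁆, ⁅θ f, j⁆ + ⁅i, θ g⁆ + (p : ℤ) • ⁅i, j⁆,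
          I.add_mem (I.add_mem (hIl _ _ hj) (hIr _ _ hi)) (I.smul_mem _ (hIl _ _ hj)), ?_⟩
        rw [LieHom.map_lie, add_lie, lie_add, lie_add, lie_smul, smul_lie, smul_lie, lie_smul,
          smul_add, smul_add]
        abel }
  have hpN : ∀ i ∈ I, (p : ℤ) • i ∈ N := fun i hi => ⟨0, i, hi, by rw [map_zero, zero_add]⟩
  have hadI2 : ∀ a, ∀ i ∈ I, adw a i ∈ I := by
    intro a i hi
    induction a with
    | nil => exact hi
    | cons x a ih => exact hIl (FreeLieAlgebra.of ℤ x) _ ih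
  have hadN : ∀ z, adw z ρ ∈ N := by
    refine rewrite_induction w _ ?_ ?_
    · intro s hs
      exact ⟨FreeLieAlgebra.of ℤ ⟨s, hs⟩, 0, I.zero_mem, by rw [hθ, smul_zero, add_zero]⟩
    · intro a b hshort hbig
      have hwl := List.length_pos_iff.2 hw.1
      have h1 : adw a ⁅ρ, adw b ρ⁆ ∈ N := by
        refine adw_lie_mem N hshort a [] b ?_ ?_ <;>
          simp only [List.length_append, List.length_nil] <;> omega
      have h2 : (p : ℤ) • adw a ⁅σ, adw b ρ⁆ ∈ N := hpN _ (hadI2 _ _ (hIl _ _ (hadI b)))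
      have h3 : ∀ u ∈ Up ℤ w, adw a (AD u (adw b ρ)) ∈ N := by
        intro u hu
        induction hu using Submodule.span_induction with
        | mem u hu =>
          obtain ⟨z, hz1, hz2, rfl⟩ := hu
          rw [AD_W, ← adw_append, ← adw_append]
          exact hbig z hz1 hz2
        | zero => rw [map_zero, LinearMap.zero_apply, map_zero]; exact N.zero_mem
        | add u v _ _ h1 h2 =>
          rw [map_add, LinearMap.add_apply, map_add]; exact N.add_mem h1 h2
        | smul m u _ h1 =>
          rw [map_smul, LinearMap.smul_apply, map_smul]; exact N.smul_mem _ h1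
      have h4 := h3 _ (hlead ℤ)
      have e : adw a (AD (phi ℤ ρ - ((c : ℤ) : ℤ) • W ℤ w - ((p : ℕ) : ℤ) • phi ℤ σ) (adw b ρ)) =
          adw a ⁅ρ, adw b ρ⁆ - c • adw (a ++ w ++ b) ρ - (p : ℤ) • adw a ⁅σ, adw b ρ⁆ := by
        rw [map_sub, map_sub, map_smul, map_smul, LinearMap.sub_apply, LinearMap.sub_apply,
          LinearMap.smul_apply, LinearMap.smul_apply, AD_phi, AD_phi, AD_W, map_sub, map_sub,
          map_smul, map_smul, adw_append, adw_append]
      have h5 : c • adw (a ++ w ++ b) ρ ∈ N := by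
        have h6 := N.sub_mem (N.sub_mem h1 h2) h4
        simp only [Int.cast_id] at h6
        rw [e] at h6
        convert h6 using 1
        abel
      have hcop : IsCoprime (p : ℤ) c :=
        (Nat.prime_iff_prime_int.1 hpp.out).coprime_iff_not_dvd.2 hpc
      obtain ⟨u, v, huv⟩ := hcop
      have e2 : adw (a ++ w ++ b) ρ =
          u • ((p : ℤ) • adw (a ++ w ++ b) ρ) + v • (c • adw (a ++ w ++ b) ρ) := by
        rw [smul_smul, smul_smul, ← add_smul, huv, one_smul]
      rw [e2]
      exact N.add_mem (N.smul_mem _ (hpN _ (hadI _))) (N.smul_mem _ h5)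
  have hIN : ∀ y ∈ I, y ∈ N := by
    intro y hy
    have hy2 := (mem_lieSpan_iff ρ y).1 hy
    have : Submodule.span ℤ (Set.range (fun z : List X => adw z ρ)) ≤ N.toSubmodule := by
      apply Submodule.span_le.2
      rintro _ ⟨z, rfl⟩
      exact hadN z
    exact this hy2
  obtain ⟨f, i, hi, hfi⟩ := hIN _ ha
  have hcomp : ∀ f, phi (ZMod p) (θ f) =
      Psi (fun s : G => gg (phi (ZMod p) ρ) s.1) (phi (ZMod p) f) := by
    let K : LieSubalgebra ℤ (FreeLieAlgebra ℤ G) :=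
      { carrier := {f | phi (ZMod p) (θ f) =
          Psi (fun s : G => gg (phi (ZMod p) ρ) s.1) (phi (ZMod p) f)}
        add_mem' := by
          intro f g (hf : _ = _) (hg : _ = _)
          change _ = _
          rw [map_add, map_add, map_add, map_add, hf, hg]
        zero_mem' := by
          change _ = _
          rw [map_zero, map_zero, map_zero, map_zero]
        smul_mem' := by
          intro m f (hf : _ = _)
          change _ = _
          rw [map_zsmul, phi_zsmul, phi_zsmul, map_zsmul, hf]
        lie_mem' := by
          intro f g (hf : _ = _) (hg : _ = _)
          change _ = _
          rw [LieHom.map_lie, phi_lie, phi_lie, map_sub, map_mul, map_mul, hf, hg] }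
    intro f
    refine sub_eq_top K ?_ f
    intro s
    change _ = _
    rw [hθ, phi_adw, phi_of, Psi_W]
    simp
  have hp0 : ((p : ℕ) : ZMod p) = 0 := ZMod.natCast_self p
  have hpz : ∀ y : FreeLieAlgebra ℤ X, phi (ZMod p) ((p : ℤ) • y) = 0 := by
    intro y
    rw [phi_zsmul, ← Int.cast_smul_eq_zsmul (ZMod p), Int.cast_natCast, hp0, zero_smul]
  have hz : Psi (fun s : G => gg (phi (ZMod p) ρ) s.1) (phi (ZMod p) f) = 0 := by
    rw [← hcomp]
    have := congrArg (phi (ZMod p)) hfi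
    rw [map_add, hpz, hpz, add_zero] at this
    exact this.symm
  have hr := hlead (ZMod p)
  rw [hp0, zero_smul, sub_zero] at hr
  have hc0 : (c : ZMod p) ≠ 0 := fun h => hpc ((ZMod.intCast_zmod_eq_zero_iff_dvd _ p).1 h)
  have hf0 := Psi_gg_inj hw hc0 hr hz
  obtain ⟨f', rfl⟩ := phi_ker_prime' p hf0
  have h0 : (p : ℤ) • (a - (θ f' + i)) = 0 := by
    rw [smul_sub, hfi, smul_add, map_zsmul, sub_self]
  have h1 := free_torsionFree' (by exact_mod_cast hpp.out.ne_zero) h0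
  rw [sub_eq_zero] at h1
  rw [h1]
  exact I.add_mem (hθI _) hi

end Main

section Final

theorem prime_step {X : Type*} [Finite X] {e : ℕ} {ρ : FreeLieAlgebra ℤ X}
    (hρ : ρ ∈ homogeneousComponent X e)
    (hprim : ∀ (k : ℤ) (σ : FreeLieAlgebra ℤ X), ρ = k • σ → k = 1 ∨ k = -1)
    (p : ℕ) (hp : p.Prime) {a : FreeLieAlgebra ℤ X}
    (ha : (p : ℤ) • a ∈ LieSubmodule.lieSpan ℤ (FreeLieAlgebra ℤ X) {ρ}) :
    a ∈ LieSubmodule.lieSpan ℤ (FreeLieAlgebra ℤ X) {ρ} := by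
  obtain ⟨_, _⟩ := exists_order X
  have : Fact p.Prime := ⟨hp⟩
  have h1 : ρ ∈ LA e := by
    have h0 : ∀ (d : ℕ) (b : FreeLieAlgebra ℤ X), IsBracketMonomial X d b → b ∈ LA d := by
      intro d b hb
      induction hb with
      | of x => exact Submodule.subset_span ⟨BT.leaf x, trivial, rfl, rfl⟩
      | lie _ _ h1 h2 => exact LA_lie h1 h2
    exact Submodule.span_le.2 (fun b hb => h0 e b hb) hρ
  refine core p h1 ?_ ha
  rintro ⟨b, hb⟩
  have h2 := hp.two_le
  rcases hprim _ _ hb with h | h <;> omega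

theorem all_step {X : Type*} [Finite X] {e : ℕ} {ρ : FreeLieAlgebra ℤ X}
    (hρ : ρ ∈ homogeneousComponent X e)
    (hprim : ∀ (k : ℤ) (σ : FreeLieAlgebra ℤ X), ρ = k • σ → k = 1 ∨ k = -1)
    (n : ℕ) : n ≠ 0 → ∀ a : FreeLieAlgebra ℤ X,
    (n : ℤ) • a ∈ LieSubmodule.lieSpan ℤ (FreeLieAlgebra ℤ X) {ρ} →
    a ∈ LieSubmodule.lieSpan ℤ (FreeLieAlgebra ℤ X) {ρ} := by
  induction n using induction_on_primes with
  | zero => intro h; exact absurd rfl h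
  | one => intro _ a ha; simpa using ha
  | prime_mul p n hp ih =>
    intro h a ha
    refine ih (fun h0 => h (by rw [h0, mul_zero])) a (prime_step hρ hprim p hp ?_)
    rw [smul_smul]
    exact_mod_cast ha

end Final

end OneRel

/-- Let `X` be a finite set with `|X| = m ≥ 2` and `L` the free Lie algebra over `ℤ` on `X`,
with its natural grading in which generators have degree `1`.  Let `ρ ∈ L` be homogeneous of
degree `e ≥ 2` which is not a proper multiple, i.e. `ρ = k·σ` forces `k = ±1`.  Then the
quotient of `L` by the Lie ideal generated by `ρ` is torsion free as a `ℤ`-module. -/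
theorem quotient_by_non_proper_multiple_torsion_free (X : Type*) [Fintype X] (m : ℕ)
    (hm : 2 ≤ m) (hcard : Fintype.card X = m) (e : ℕ) (he : 2 ≤ e)
    (ρ : FreeLieAlgebra ℤ X) (hρ : ρ ∈ homogeneousComponent X e)
    (hprim : ∀ (k : ℤ) (σ : FreeLieAlgebra ℤ X), ρ = k • σ → k = 1 ∨ k = -1) :
    Submodule.torsion ℤ
      (FreeLieAlgebra ℤ X ⧸ lieSpan ℤ (FreeLieAlgebra ℤ X) {ρ}) = ⊥ := by
  rw [_root_.eq_bot_iff]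
  intro q hq
  obtain ⟨n, hn⟩ := hq
  obtain ⟨a, rfl⟩ := Submodule.mkQ_surjective
    (lieSpan ℤ (FreeLieAlgebra ℤ X) {ρ}).toSubmodule q
  have hn0 : (n : ℤ) ≠ 0 := nonZeroDivisors.coe_ne_zero n
  have h1 : (n : ℤ) • a ∈ (lieSpan ℤ (FreeLieAlgebra ℤ X) {ρ}).toSubmodule := by
    rw [← Submodule.Quotient.mk_eq_zero]
    exact hn
  have h2 : ((n : ℤ).natAbs : ℤ) • a ∈ lieSpan ℤ (FreeLieAlgebra ℤ X) {ρ} := by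
    rcases Int.natAbs_eq (n : ℤ) with h | h
    · rw [← h]; exact h1
    · rw [show (((n : ℤ).natAbs : ℤ)) = -(n : ℤ) by omega, neg_smul]
      exact (lieSpan ℤ (FreeLieAlgebra ℤ X) {ρ}).toSubmodule.neg_mem h1
  have h3 := OneRel.all_step hρ hprim _ (Int.natAbs_ne_zero.2 hn0) a h2
  exact (Submodule.Quotient.mk_eq_zero
    (lieSpan ℤ (FreeLieAlgebra ℤ X) {ρ}).toSubmodule).2 h3
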